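/- Let μ be a probability measure on ℝ^K, m ∈ ℝ^K, and Σ a positive semidefinite K×K real matrix. If there exists an open neighborhood V of the origin such that the characteristic function of μ satisfies φ_μ(ω) = exp(i⟨m,ω⟩ − ½⟨ω, Σω⟩) for all ω ∈ V, then this identity holds for all ω ∈ ℝ^K; equivalently, μ is the Gaussian measure on ℝ^K with mean m and covariance Σ. -/

import Mathlib

open MeasureTheory

/-- Characteristic function of a probability measure on `ℝ^K`. -/
noncomputable def charM {K : ℕ} (μ : Measure (Fin K → ℝ)) (s : Fin K → ℝ) : ℂ :=
  ∫ x, Complex.exp (Complex.I * ((∑ k, s k * x k : ℝ) : ℂ)) ∂μ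

/-- The characteristic function of the Gaussian measure on `ℝ^K` with mean `m`
and covariance `Σ`: `ω ↦ exp(i⟨m,ω⟩ − ½⟨ω,Σω⟩)`. -/
noncomputable def gaussCF {K : ℕ} (m : Fin K → ℝ) (S : Matrix (Fin K) (Fin K) ℝ)
    (ω : Fin K → ℝ) : ℂ :=
  Complex.exp (Complex.I * ((∑ k, m k * ω k : ℝ) : ℂ)
    - (1 / 2 : ℂ) * ((∑ k1, ∑ k2, ω k1 * S k1 k2 * ω k2 : ℝ) : ℂ))

/-!
Let `ν` be Gaussian, or just have exponential moments, and let the characteristic functions of `μ`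
and `ν` agree near the origin. On the line, `(sin (h * x) / h) ^ (2 * n)` is a trigonometric
polynomial in `x` with frequencies at most `2 * n * |h|`, so for small `h` its integrals against `μ`
and `ν` are the same; Fatou's lemma as `h → 0` bounds the even moments of `μ` by those of `ν`.
Summing the series of `cosh` transfers the exponential moments of `ν` to `μ`, so both complex moment
generating functions are analytic on a vertical strip around the imaginary axis. They agree near `0`
on that axis, hence on the strip. In higher dimension, project along every continuous linear
functional.
-/

open ProbabilityTheory Filter Topology WithLp
open scoped RealInnerProductSpace

section EvenMoments

lemma abs_sin_mul_div_le (h x : ℝ) : |Real.sin (h * x) / h| ≤ |x| := by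
  rw [abs_div]
  refine div_le_of_le_mul₀ (abs_nonneg h) (abs_nonneg x) ?_
  rw [mul_comm, ← abs_mul]
  exact Real.abs_sin_le_abs

lemma tendsto_sin_mul_div (x : ℝ) : Tendsto (fun h ↦ Real.sin (h * x) / h) (𝓝[≠] 0) (𝓝 x) := by
  have deriv_at_zero : HasDerivAt (fun h ↦ Real.sin (h * x)) x 0 := by
    simpa using ((hasDerivAt_id (0 : ℝ)).mul_const x).sin
  simpa [div_eq_inv_mul] using deriv_at_zero.tendsto_slope_zero

variable (μ : Measure ℝ) [IsFiniteMeasure μ]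

lemma integrable_sin_pow_mul_cexp (h t : ℝ) (n : ℕ) :
    Integrable (fun x : ℝ ↦ (Real.sin (h * x) : ℂ) ^ n * Complex.exp (t * x * Complex.I)) μ := by
  refine .of_bound (C := 1) (by fun_prop) (ae_of_all _ fun x ↦ ?_)
  rw [norm_mul, norm_pow, ← Complex.ofReal_mul, Complex.norm_exp_ofReal_mul_I, mul_one,
    Complex.norm_real]
  exact pow_le_one₀ (norm_nonneg _) (Real.abs_sin_le_one _)

lemma integral_sin_pow_succ_mul_cexp (h t : ℝ) (n : ℕ) :
    ∫ x, (Real.sin (h * x) : ℂ) ^ (n + 1) * Complex.exp (t * x * Complex.I) ∂μ =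
      Complex.I / 2 *
        (∫ x, (Real.sin (h * x) : ℂ) ^ n * Complex.exp ((t - h : ℝ) * x * Complex.I) ∂μ -
          ∫ x, (Real.sin (h * x) : ℂ) ^ n * Complex.exp ((t + h : ℝ) * x * Complex.I) ∂μ) := by
  rw [← integral_sub (integrable_sin_pow_mul_cexp μ h _ n) (integrable_sin_pow_mul_cexp μ h _ n),
    ← integral_const_mul]
  congr 1 with x
  have exp_sub_h : Complex.exp ((t - h : ℝ) * x * Complex.I) =
      Complex.exp (t * x * Complex.I) * Complex.exp (-(h * x) * Complex.I) := by
    rw [← Complex.exp_add]; push_cast; ring_nf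
  have exp_add_h : Complex.exp ((t + h : ℝ) * x * Complex.I) =
      Complex.exp (t * x * Complex.I) * Complex.exp (h * x * Complex.I) := by
    rw [← Complex.exp_add]; push_cast; ring_nf
  rw [exp_sub_h, exp_add_h, pow_succ, Complex.ofReal_sin, Complex.ofReal_mul,
    Complex.sin.eq_def (h * x)]
  ring

lemma lintegral_sin_div_pow_eq_ofReal (h : ℝ) {n : ℕ} (hn : Even n) :
    ∫⁻ x, ENNReal.ofReal ((Real.sin (h * x) / h) ^ n) ∂μ =
      ENNReal.ofReal ((∫ x, Real.sin (h * x) ^ n ∂μ) / h ^ n) := by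
  have sin_pow_integrable : Integrable (fun x ↦ Real.sin (h * x) ^ n) μ := by
    refine .of_bound (C := 1) (by fun_prop) (ae_of_all _ fun x ↦ ?_)
    rw [norm_pow]
    exact pow_le_one₀ (norm_nonneg _) (Real.abs_sin_le_one _)
  simp_rw [div_pow]
  rw [← integral_div, ofReal_integral_eq_lintegral_ofReal (sin_pow_integrable.div_const _)]
  exact ae_of_all _ fun x ↦ div_nonneg (hn.pow_nonneg _) (hn.pow_nonneg _)

variable {μ} {ν : Measure ℝ} [IsFiniteMeasure ν]

lemma integral_sin_pow_mul_cexp_congr {ε : ℝ} (hμν : ∀ t, |t| < ε → charFun μ t = charFun ν t)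
    (h : ℝ) (n : ℕ) (t : ℝ) (ht : |t| + n * |h| < ε) :
    ∫ x, (Real.sin (h * x) : ℂ) ^ n * Complex.exp (t * x * Complex.I) ∂μ =
      ∫ x, (Real.sin (h * x) : ℂ) ^ n * Complex.exp (t * x * Complex.I) ∂ν := by
  induction n generalizing t with
  | zero => simpa [charFun_apply_real] using hμν t (by simpa using ht)
  | succ n ih =>
    push_cast at ht
    rw [integral_sin_pow_succ_mul_cexp, integral_sin_pow_succ_mul_cexp,
      ih (t - h) (by linarith [abs_sub t h]), ih (t + h) (by linarith [abs_add_le t h])]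

lemma integral_sin_pow_congr {ε : ℝ} (hμν : ∀ t, |t| < ε → charFun μ t = charFun ν t)
    {h : ℝ} {n : ℕ} (hn : n * |h| < ε) :
    ∫ x, Real.sin (h * x) ^ n ∂μ = ∫ x, Real.sin (h * x) ^ n ∂ν := by
  apply Complex.ofReal_injective
  rw [← integral_complex_ofReal, ← integral_complex_ofReal]
  simpa using integral_sin_pow_mul_cexp_congr hμν h n 0 (by simpa using hn)

lemma eventually_lintegral_sin_div_pow_le (hμν : charFun μ =ᶠ[𝓝 0] charFun ν) {n : ℕ}
    (hn : Even n) :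
    ∀ᶠ h in 𝓝[≠] (0 : ℝ), ∫⁻ x, ENNReal.ofReal ((Real.sin (h * x) / h) ^ n) ∂μ ≤
      ∫⁻ x, ENNReal.ofReal (x ^ n) ∂ν := by
  obtain ⟨ε, ε_pos, charFun_eq⟩ := Metric.eventually_nhds_iff.1 hμν
  simp only [Real.dist_eq, sub_zero] at charFun_eq
  have small : ∀ᶠ h in 𝓝 (0 : ℝ), n * |h| < ε :=
    (show Continuous fun h : ℝ ↦ n * |h| by fun_prop).continuousAt.eventually_lt_const
      (by simpa using ε_pos)
  filter_upwards [nhdsWithin_le_nhds small] with h hh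
  rw [lintegral_sin_div_pow_eq_ofReal μ h hn,
    integral_sin_pow_congr (fun t ht ↦ charFun_eq ht) hh,
    ← lintegral_sin_div_pow_eq_ofReal ν h hn]
  refine lintegral_mono fun x ↦ ENNReal.ofReal_le_ofReal ?_
  rw [← hn.pow_abs, ← hn.pow_abs x]
  exact pow_le_pow_left₀ (abs_nonneg _) (abs_sin_mul_div_le h x) n

lemma lintegral_even_pow_le_of_charFun_eventuallyEq (hμν : charFun μ =ᶠ[𝓝 0] charFun ν) {n : ℕ}
    (hn : Even n) : ∫⁻ x, ENNReal.ofReal (x ^ n) ∂μ ≤ ∫⁻ x, ENNReal.ofReal (x ^ n) ∂ν := by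
  have liminf_eq (x : ℝ) :
      liminf (fun h ↦ ENNReal.ofReal ((Real.sin (h * x) / h) ^ n)) (𝓝[≠] 0) =
        ENNReal.ofReal (x ^ n) :=
    (ENNReal.tendsto_ofReal ((tendsto_sin_mul_div x).pow n)).liminf_eq
  calc ∫⁻ x, ENNReal.ofReal (x ^ n) ∂μ
      = ∫⁻ x, liminf (fun h ↦ ENNReal.ofReal ((Real.sin (h * x) / h) ^ n)) (𝓝[≠] 0) ∂μ := by
        simp_rw [liminf_eq]
    _ ≤ liminf (fun h ↦ ∫⁻ x, ENNReal.ofReal ((Real.sin (h * x) / h) ^ n) ∂μ) (𝓝[≠] 0) :=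
        lintegral_liminf_le fun h ↦ by fun_prop
    _ ≤ ∫⁻ x, ENNReal.ofReal (x ^ n) ∂ν :=
        liminf_le_of_frequently_le' (eventually_lintegral_sin_div_pow_le hμν hn).frequently

end EvenMoments

section ExponentialMoments

lemma lintegral_cosh_eq_tsum (μ : Measure ℝ) (c : ℝ) :
    ∫⁻ x, ENNReal.ofReal (Real.cosh (c * x)) ∂μ =
      ∑' n : ℕ, ENNReal.ofReal (c ^ (2 * n) / (2 * n).factorial) *
        ∫⁻ x, ENNReal.ofReal (x ^ (2 * n)) ∂μ := by
  have even_pow_nonneg (y : ℝ) (n : ℕ) : 0 ≤ y ^ (2 * n) := (even_two_mul n).pow_nonneg y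
  have cosh_series (x : ℝ) : ENNReal.ofReal (Real.cosh (c * x)) =
      ∑' n : ℕ, ENNReal.ofReal (c ^ (2 * n) / (2 * n).factorial) *
        ENNReal.ofReal (x ^ (2 * n)) := by
    rw [Real.cosh_eq_tsum, ENNReal.ofReal_tsum_of_nonneg
      (fun n ↦ div_nonneg (even_pow_nonneg _ _) (by positivity)) (Real.hasSum_cosh _).summable]
    refine tsum_congr fun n ↦ ?_
    rw [← ENNReal.ofReal_mul (div_nonneg (even_pow_nonneg _ _) (by positivity)), mul_pow,
      mul_div_right_comm]
  simp_rw [cosh_series]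
  rw [lintegral_tsum fun n ↦ by fun_prop]
  exact tsum_congr fun n ↦ lintegral_const_mul _ (by fun_prop)

variable {Ω : Type*} {mΩ : MeasurableSpace Ω} {P : Measure Ω} {X : Ω → ℝ}

lemma integrable_cosh_mul_iff (hX : AEMeasurable X P) (c : ℝ) :
    Integrable (fun ω ↦ Real.cosh (c * X ω)) P ↔
      c ∈ integrableExpSet X P ∧ -c ∈ integrableExpSet X P := by
  constructor
  · have exp_integrable {b : ℝ} (h : Integrable (fun ω ↦ Real.cosh (b * X ω)) P) :
        b ∈ integrableExpSet X P := by
      refine (h.const_mul 2).mono' (by fun_prop) (ae_of_all _ fun ω ↦ ?_)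
      rw [Real.norm_of_nonneg (Real.exp_pos _).le, Real.cosh_eq]
      linarith [Real.exp_pos (-(b * X ω))]
    exact fun h ↦ ⟨exp_integrable h, exp_integrable (by simpa using h)⟩
  · rintro ⟨hc, hnc⟩
    refine ((hc.add hnc).div_const 2).congr (ae_of_all _ fun ω ↦ ?_)
    simp [Real.cosh_eq]

lemma integrableExpSet_id_map (hX : AEMeasurable X P) :
    integrableExpSet id (P.map X) = integrableExpSet X P := by
  ext c
  exact integrable_map_measure (by fun_prop) hX

variable {μ ν : Measure ℝ}

lemma integrable_cosh_mul_of_charFun_eventuallyEq [IsFiniteMeasure μ] [IsFiniteMeasure ν]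
    (hμν : charFun μ =ᶠ[𝓝 0] charFun ν) {c : ℝ} (hc : Integrable (fun x ↦ Real.cosh (c * x)) ν) :
    Integrable (fun x ↦ Real.cosh (c * x)) μ := by
  have cosh_nonneg (ρ : Measure ℝ) : 0 ≤ᵐ[ρ] fun x ↦ Real.cosh (c * x) :=
    ae_of_all _ fun x ↦ (Real.cosh_pos _).le
  refine ⟨by fun_prop, (hasFiniteIntegral_iff_ofReal (cosh_nonneg μ)).2 ?_⟩
  refine lt_of_le_of_lt ?_ ((hasFiniteIntegral_iff_ofReal (cosh_nonneg ν)).1 hc.2)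
  rw [lintegral_cosh_eq_tsum, lintegral_cosh_eq_tsum]
  exact ENNReal.tsum_le_tsum fun n ↦ mul_le_mul_right
    (lintegral_even_pow_le_of_charFun_eventuallyEq hμν (even_two_mul n)) _

lemma zero_mem_interior_integrableExpSet_of_charFun_eventuallyEq [IsFiniteMeasure μ]
    [IsFiniteMeasure ν] (hμν : charFun μ =ᶠ[𝓝 0] charFun ν)
    (hν : 0 ∈ interior (integrableExpSet id ν)) : 0 ∈ interior (integrableExpSet id μ) := by
  rw [mem_interior_iff_mem_nhds] at hν ⊢
  have neg_mem : ∀ᶠ c in 𝓝 (0 : ℝ), -c ∈ integrableExpSet id ν :=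
    (continuous_neg.tendsto' 0 0 neg_zero).eventually hν
  filter_upwards [hν, neg_mem] with c hc hnc
  have cosh_integrable := (integrable_cosh_mul_iff aemeasurable_id c).2 ⟨hc, hnc⟩
  exact ((integrable_cosh_mul_iff aemeasurable_id c).1
    (integrable_cosh_mul_of_charFun_eventuallyEq hμν cosh_integrable)).1

end ExponentialMoments

section Uniqueness

lemma charFun_eq_of_zero_mem_interior_integrableExpSet {μ ν : Measure ℝ}
    (hμ : 0 ∈ interior (integrableExpSet id μ)) (hν : 0 ∈ interior (integrableExpSet id ν))
    (hμν : charFun μ =ᶠ[𝓝 0] charFun ν) : charFun μ = charFun ν := by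
  set I := interior (integrableExpSet id μ) ∩ interior (integrableExpSet id ν)
  have strip_preconnected : IsPreconnected (Complex.re ⁻¹' I) :=
    ((convex_integrableExpSet.interior.inter convex_integrableExpSet.interior).linear_preimage
      Complex.reLm).isPreconnected
  have imaginary_axis : Tendsto (fun t : ℝ ↦ t * Complex.I) (𝓝[≠] 0) (𝓝[≠] 0) := by
    refine tendsto_nhdsWithin_iff.2 ⟨?_, ?_⟩
    · exact tendsto_nhdsWithin_of_tendsto_nhds <|
        (show Continuous fun t : ℝ ↦ t * Complex.I by fun_prop).tendsto' 0 0 (by simp)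
    · filter_upwards [self_mem_nhdsWithin] with t ht
      simpa using ht
  have frequently_eq : ∃ᶠ z in 𝓝[≠] 0, complexMGF id μ z = complexMGF id ν z := by
    refine imaginary_axis.frequently (Eventually.frequently ?_)
    filter_upwards [nhdsWithin_le_nhds hμν] with t ht
    simpa only [complexMGF_id_mul_I] using ht
  have eqOn_strip : Set.EqOn (complexMGF id μ) (complexMGF id ν) (Complex.re ⁻¹' I) :=
    (analyticOnNhd_complexMGF.mono fun _ hz ↦ hz.1).eqOn_of_preconnected_of_frequently_eq
      (analyticOnNhd_complexMGF.mono fun _ hz ↦ hz.2) strip_preconnected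
      (show (0 : ℂ) ∈ Complex.re ⁻¹' I from ⟨hμ, hν⟩) frequently_eq
  ext t
  rw [← complexMGF_id_mul_I, ← complexMGF_id_mul_I]
  exact eqOn_strip (show (t * Complex.I).re ∈ I by simpa using ⟨hμ, hν⟩)

theorem eq_of_charFunDual_eventuallyEq {E : Type*} [NormedAddCommGroup E] [NormedSpace ℝ E]
    [CompleteSpace E] [SecondCountableTopology E] [MeasurableSpace E] [BorelSpace E]
    {μ ν : Measure E} [IsFiniteMeasure μ] [IsFiniteMeasure ν]
    (hν : ∀ L : StrongDual ℝ E, 0 ∈ interior (integrableExpSet L ν))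
    (hμν : charFunDual μ =ᶠ[𝓝 0] charFunDual ν) : μ = ν := by
  refine Measure.ext_of_charFunDual (funext fun L ↦ ?_)
  have along_line : charFun (μ.map L) =ᶠ[𝓝 0] charFun (ν.map L) := by
    have smul_tendsto : Tendsto (fun t : ℝ ↦ t • L) (𝓝 0) (𝓝 0) :=
      (show Continuous fun t : ℝ ↦ t • L by fun_prop).tendsto' 0 0 (zero_smul ℝ L)
    filter_upwards [smul_tendsto.eventually hμν] with t ht
    simpa only [charFun_map_eq_charFunDual_smul] using ht
  have exp_moments_ν : 0 ∈ interior (integrableExpSet id (ν.map L)) := by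
    rw [integrableExpSet_id_map (by fun_prop)]
    exact hν L
  have exp_moments_μ := zero_mem_interior_integrableExpSet_of_charFun_eventuallyEq along_line
    exp_moments_ν
  rw [charFunDual_eq_charFun_map_one, charFunDual_eq_charFun_map_one,
    charFun_eq_of_zero_mem_interior_integrableExpSet exp_moments_μ exp_moments_ν along_line]

lemma integrableExpSet_strongDual_eq_univ_of_isGaussian {E : Type*} [TopologicalSpace E]
    [AddCommMonoid E] [Module ℝ E] [MeasurableSpace E] [OpensMeasurableSpace E] (ν : Measure E)
    [IsGaussian ν] (L : StrongDual ℝ E) : integrableExpSet L ν = Set.univ := by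
  rw [← integrableExpSet_id_map (by fun_prop), IsGaussian.map_eq_gaussianReal,
    integrableExpSet_id_gaussianReal]

theorem eq_of_charFun_eventuallyEq_of_isGaussian {E : Type*} [NormedAddCommGroup E]
    [InnerProductSpace ℝ E] [CompleteSpace E] [SecondCountableTopology E] [MeasurableSpace E]
    [BorelSpace E] {μ ν : Measure E} [IsFiniteMeasure μ] [IsGaussian ν]
    (hμν : charFun μ =ᶠ[𝓝 0] charFun ν) : μ = ν := by
  refine eq_of_charFunDual_eventuallyEq
    (by simp [integrableExpSet_strongDual_eq_univ_of_isGaussian]) ?_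
  have riesz_tendsto : Tendsto (InnerProductSpace.toDual ℝ E).symm (𝓝 0) (𝓝 0) :=
    (InnerProductSpace.toDual ℝ E).symm.continuous.tendsto' 0 0 (map_zero _)
  filter_upwards [riesz_tendsto.eventually hμν] with L hL
  simpa only [charFun_toDual_symm_eq_charFunDual] using hL

end Uniqueness

section Coordinates

variable {K : ℕ}

lemma charFun_map_toLp_eq_charM (μ : Measure (Fin K → ℝ)) (ω : Fin K → ℝ) :
    charFun (μ.map (toLp 2)) (toLp 2 ω) = charM μ ω := by
  rw [charFun_apply, ← MeasurableEquiv.coe_toLp, integral_map_equiv, charM]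
  simp [PiLp.inner_apply, mul_comm Complex.I]

lemma charFun_multivariateGaussian_eq_gaussCF (m : Fin K → ℝ) {S : Matrix (Fin K) (Fin K) ℝ}
    (hS : S.PosSemidef) (ω : Fin K → ℝ) :
    charFun (multivariateGaussian (toLp 2 m) S) (toLp 2 ω) = gaussCF m S ω := by
  have quadratic : ω ⬝ᵥ S.mulVec ω = ∑ k, ∑ l, ω k * S k l * ω l := by
    simp only [dotProduct, Matrix.mulVec, Finset.mul_sum, mul_assoc]
  have linear : ⟪toLp 2 ω, toLp 2 m⟫ = ∑ k, m k * ω k := by simp [PiLp.inner_apply]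
  rw [charFun_multivariateGaussian hS, gaussCF, linear, quadratic]
  ring_nf

end Coordinates

/-- analytic continuation, Lukacs: if the characteristic function of a
probability measure `μ` on `ℝ^K` agrees with the Gaussian characteristic function
`exp(i⟨m,ω⟩ − ½⟨ω,Σω⟩)` on an open neighborhood of the origin, then it agrees with it
on all of `ℝ^K`; i.e. `μ` is the Gaussian measure with mean `m` and covariance `Σ`. -/
theorem stmt6 {K : ℕ} (μ : Measure (Fin K → ℝ)) [IsProbabilityMeasure μ]
    (m : Fin K → ℝ) (S : Matrix (Fin K) (Fin K) ℝ) (hS : S.PosSemidef)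
    (V : Set (Fin K → ℝ)) (hV : IsOpen V) (h0 : (0 : Fin K → ℝ) ∈ V)
    (hGauss : ∀ ω ∈ V, charM μ ω = gaussCF m S ω) :
    ∀ ω, charM μ ω = gaussCF m S ω := by
  have agree_near_zero : charFun (μ.map (toLp 2)) =ᶠ[𝓝 0]
      charFun (multivariateGaussian (toLp 2 m) S) := by
    have ofLp_tendsto : Tendsto (ofLp : EuclideanSpace ℝ (Fin K) → _) (𝓝 0) (𝓝 0) :=
      (PiLp.continuous_ofLp 2 _).tendsto' 0 0 rfl
    filter_upwards [ofLp_tendsto.eventually (hV.mem_nhds h0)] with t ht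
    rw [← toLp_ofLp 2 t, charFun_map_toLp_eq_charM, charFun_multivariateGaussian_eq_gaussCF m hS]
    exact hGauss _ ht
  have isGaussian : μ.map (toLp 2) = multivariateGaussian (toLp 2 m) S :=
    eq_of_charFun_eventuallyEq_of_isGaussian agree_near_zero
  intro ω
  rw [← charFun_map_toLp_eq_charM, isGaussian, charFun_multivariateGaussian_eq_gaussCF m hS]
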